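/- Let F, E ⊆ X^ω with F Δ E ⊆ F', where E is open and F' is a regular ω-language of first Baire category. Then for every Borel measure μ on X^ω with 0 < μ(X^ω) < ∞, with support supp(μ) = X^ω, and satisfying the balance condition, it holds that μ(F) = 0 if and only if F is of first Baire category. -/

import Mathlib

open Set MeasureTheory Computability

namespace AutoBaire

/-- The Cantor topology on the space of ω-words over `X`:
the product of the discrete topology on `X`. -/
def cantorTop (X : Type) : TopologicalSpace (ℕ → X) :=
  @Pi.topologicalSpace ℕ (fun _ => X) (fun _ => ⊥)

/-- The Borel σ-algebra of the Cantor space. -/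
def cantorBorel (X : Type) : MeasurableSpace (ℕ → X) :=
  @borel (ℕ → X) (cantorTop X)

variable {X : Type}

/-- Concatenation `w·ξ` of a finite word with an ω-word. -/
def wcat (w : List X) (ξ : ℕ → X) : ℕ → X :=
  Stream'.appendStream' w ξ

/-- The ball (cylinder) `w·X^ω`. -/
def cyl (w : List X) : Set (ℕ → X) := {ξ | ∃ η : ℕ → X, ξ = wcat w η}

/-- The ω-language `W·A` for a language `W` and an ω-language `A`. -/
def catOmega (W : Language X) (A : Set (ℕ → X)) : Set (ℕ → X) :=
  {ξ | ∃ w ∈ W, ∃ η ∈ A, ξ = wcat w η}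

/-- `V^ω`: the set of ω-words that are infinite concatenations
`v₁·v₂·⋯` of non-empty words `vᵢ ∈ V`. -/
def omegaPow (V : Language X) : Set (ℕ → X) :=
  {ξ | ∃ f : ℕ → List X, (∀ i, f i ∈ V ∧ f i ≠ []) ∧
    ∀ k, ξ ∈ cyl (((List.range k).map f).flatten)}

/-- Regular languages: those obtained from finite languages via the operations
union, concatenation and star. -/
inductive IsRegLang : Language X → Prop
  | finite (W : Language X) : (W : Set (List X)).Finite → IsRegLang W
  | union (W V : Language X) : IsRegLang W → IsRegLang V → IsRegLang (W + V)
  | concat (W V : Language X) : IsRegLang W → IsRegLang V → IsRegLang (W * V)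
  | star (W : Language X) : IsRegLang W → IsRegLang (W∗)

/-- Regular ω-languages: finite unions `⋃ᵢ Wᵢ·Vᵢ^ω` with `Wᵢ, Vᵢ` regular. -/
def IsRegOmega (F : Set (ℕ → X)) : Prop :=
  ∃ (n : ℕ) (W V : Fin n → Language X),
    (∀ i, IsRegLang (W i) ∧ IsRegLang (V i)) ∧
    F = ⋃ i, catOmega (W i) (omegaPow (V i))

/-- `X*·w·X^ω`: the set of ω-words containing `w` as an infix. -/
def infixOcc (w : List X) : Set (ℕ → X) :=
  {ξ | ∃ u : List X, ξ ∈ cyl (u ++ w)}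

/-- An ω-word is disjunctive if every finite word occurs in it as an infix. -/
def Disjunctive (ξ : ℕ → X) : Prop := ∀ w : List X, ξ ∈ infixOcc w

/-- Ultimately periodic ω-words: `ξ = w·v·v·v·⋯` with `v ≠ e`. -/
def UltPeriodic (ξ : ℕ → X) : Prop :=
  ∃ (w v : List X) (h : v ≠ []), ξ = wcat w (Stream'.cycle v h)

/-- The Automatic Baire property: `F Δ E ⊆ F'` for some regular open
ω-language `E` and some regular ω-language `F'` of first Baire category. -/
def HasABP (F : Set (ℕ → X)) : Prop :=
  ∃ E F' : Set (ℕ → X),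
    IsRegOmega E ∧ @IsOpen _ (cantorTop X) E ∧
    IsRegOmega F' ∧ @IsMeagre _ (cantorTop X) F' ∧
    symmDiff F E ⊆ F'

/-- The measure is finite and non-null: `0 < μ(X^ω) < ∞`. -/
def FiniteNonNull (μ : @MeasureTheory.Measure (ℕ → X) (cantorBorel X)) : Prop :=
  0 < μ Set.univ ∧ μ Set.univ < ⊤

/-- `supp(μ) = X^ω`: every non-empty open set has positive measure. -/
def FullSupport (μ : @MeasureTheory.Measure (ℕ → X) (cantorBorel X)) : Prop :=
  ∀ U : Set (ℕ → X), @IsOpen _ (cantorTop X) U → U.Nonempty → 0 < μ U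

/-- The balance condition: there is `c > 0` such that for all `w ∈ X*`, `x ∈ X`
either `μ(wx·X^ω) = 0` or `c·μ(w·X^ω) ≤ μ(wx·X^ω)`. -/
def Balanced (μ : @MeasureTheory.Measure (ℕ → X) (cantorBorel X)) : Prop :=
  ∃ c : ENNReal, 0 < c ∧ ∀ (w : List X) (x : X),
    μ (cyl (w ++ [x])) = 0 ∨ c * μ (cyl w) ≤ μ (cyl (w ++ [x]))


theorem mem_cyl_iff (w : List X) (ξ : ℕ → X) :
    ξ ∈ cyl w ↔ ∀ i (h : i < w.length), ξ i = w[i] := by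
  constructor
  · rintro ⟨η, rfl⟩ i h
    exact Stream'.get_append_left i w η h
  · intro h
    refine ⟨fun n => ξ (w.length + n), ?_⟩
    funext i
    by_cases hi : i < w.length
    · rw [h i hi]
      exact (Stream'.get_append_left i w _ hi).symm
    · obtain ⟨k, rfl⟩ := Nat.exists_eq_add_of_le (not_lt.1 hi)
      exact (Stream'.get_append_right k w (fun n => ξ (w.length + n))).symm

theorem wcat_append (u v : List X) (η : ℕ → X) : wcat (u ++ v) η = wcat u (wcat v η) :=
  Stream'.append_append_stream u v η

theorem wcat_inj (u : List X) {η θ : ℕ → X} (h : wcat u η = wcat u θ) : η = θ :=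
  Stream'.append_right_injective u η θ h

theorem mem_cyl_nil (ξ : ℕ → X) : ξ ∈ cyl ([] : List X) := ⟨ξ, rfl⟩

theorem cyl_append_subset (u v : List X) : cyl (u ++ v) ⊆ cyl u := by
  rintro ξ ⟨η, rfl⟩
  exact ⟨wcat v η, wcat_append u v η⟩

theorem wcat_mem_cyl_append (u v : List X) (η : ℕ → X) : wcat u η ∈ cyl (u ++ v) ↔ η ∈ cyl v := by
  constructor
  · rintro ⟨θ, h⟩
    rw [wcat_append] at h
    exact ⟨θ, wcat_inj u h⟩
  · rintro ⟨θ, rfl⟩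
    exact ⟨θ, (wcat_append u v θ).symm⟩

theorem cyl_eq_prefix (ξ : ℕ → X) (n : ℕ) (η : ℕ → X) :
    η ∈ cyl (List.ofFn (fun i : Fin n => ξ i)) ↔ ∀ i < n, η i = ξ i := by
  rw [mem_cyl_iff]; simp

theorem eq_prefix_of_mem_cyl {w : List X} {ξ : ℕ → X} (h : ξ ∈ cyl w) {n : ℕ} (hn : w.length ≤ n) :
    ∃ y, List.ofFn (fun i : Fin n => ξ i) = w ++ y := by
  rw [mem_cyl_iff] at h
  have : w <+: List.ofFn (fun i : Fin n => ξ i) := by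
    rw [List.prefix_iff_getElem]
    refine ⟨by simpa using hn, fun i hi => ?_⟩
    simp [h i hi]
  obtain ⟨y, hy⟩ := this
  exact ⟨y, hy.symm⟩

theorem isOpen_cyl (w : List X) : @IsOpen _ (cantorTop X) (cyl w) := by
  letI : TopologicalSpace X := ⊥
  haveI : DiscreteTopology X := ⟨rfl⟩
  change IsOpen (cyl w)
  rcases (cyl w).eq_empty_or_nonempty with h | ⟨ξ, hξ⟩
  · rw [h]; exact isOpen_empty
  · have : cyl w = PiNat.cylinder ξ w.length := by
      ext η
      rw [mem_cyl_iff, PiNat.mem_cylinder_iff]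
      rw [mem_cyl_iff] at hξ
      exact ⟨fun h i hi => by rw [h i hi, hξ i hi], fun h i hi => by rw [h i hi, hξ i hi]⟩
    rw [this]
    exact PiNat.isOpen_cylinder (E := fun _ => X) ξ _

theorem exists_cyl_subset {U : Set (ℕ → X)} (hU : @IsOpen _ (cantorTop X) U) {ξ : ℕ → X} (hξ : ξ ∈ U) :
    ∃ n, ∀ m, n ≤ m → cyl (List.ofFn (fun i : Fin m => ξ i)) ⊆ U := by
  letI : TopologicalSpace X := ⊥
  haveI : DiscreteTopology X := ⟨rfl⟩
  obtain ⟨v, ⟨x, n, rfl⟩, h1, h2⟩ :=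
    (PiNat.isTopologicalBasis_cylinders (fun _ : ℕ => X)).exists_subset_of_mem_open hξ hU
  refine ⟨n, fun m hm η hη => h2 ?_⟩
  rw [cyl_eq_prefix] at hη
  rw [PiNat.mem_cylinder_iff] at h1 ⊢
  intro i hi
  rw [hη i (by omega), h1 i hi]

theorem dense_ext [Nonempty X] {U : Set (ℕ → X)} (hU : @IsOpen _ (cantorTop X) U)
    (hd : @Dense _ (cantorTop X) U) (p : List X) : ∃ y, cyl (p ++ y) ⊆ U := by
  letI := cantorTop X
  obtain ⟨ξ, h1, h2⟩ := hd.inter_open_nonempty (cyl p) (isOpen_cyl p)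
    ⟨wcat p (fun _ => Classical.arbitrary X), _, rfl⟩
  obtain ⟨n, hn⟩ := exists_cyl_subset hU h2
  obtain ⟨y, hy⟩ := eq_prefix_of_mem_cyl h1 (le_max_right n p.length)
  exact ⟨y, hy ▸ hn _ (le_max_left _ _)⟩

theorem le_length_flatten (b : ℕ → List X) (hb : ∀ i, b i ≠ []) (k : ℕ) :
    k ≤ (((List.range k).map b).flatten).length := by
  induction k with
  | zero => simp
  | succ k ih =>
    rw [List.range_succ, List.map_append, List.flatten_append, List.length_append]
    have := List.length_pos_iff.2 (hb k)
    simp only [List.map_cons, List.map_nil, List.flatten_cons, List.flatten_nil, List.append_nil]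
    omega

theorem flatten_mono (b : ℕ → List X) {k l : ℕ} (h : k ≤ l) :
    ((List.range k).map b).flatten <+: ((List.range l).map b).flatten := by
  induction h with
  | refl => exact List.prefix_rfl
  | step h ih =>
    rw [List.range_succ, List.map_append, List.flatten_append]
    exact ih.trans (List.prefix_append _ _)

theorem exists_limit (b : ℕ → List X) (hb : ∀ i, b i ≠ []) :
    ∃ ξ : ℕ → X, ∀ k, ξ ∈ cyl (((List.range k).map b).flatten) := by
  refine ⟨fun i => (((List.range (i+1)).map b).flatten)[i]'(le_length_flatten b hb (i+1)), fun k => ?_⟩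
  rw [mem_cyl_iff]
  intro i hi
  rcases le_total (i+1) k with h | h
  · exact (List.prefix_iff_getElem.1 (flatten_mono b h)).2 i _
  · exact ((List.prefix_iff_getElem.1 (flatten_mono b h)).2 i hi).symm

theorem flatten_range_succ (b : ℕ → List X) (k : ℕ) :
    ((List.range (k+1)).map b).flatten = b 0 ++ ((List.range k).map (fun i => b (i+1))).flatten := by
  rw [List.range_succ_eq_map]
  simp [Function.comp_def]

theorem coind (V : Language X) (S : Set (ℕ → X))
    (h : ∀ ξ ∈ S, ∃ v ∈ V, v ≠ [] ∧ ∃ η ∈ S, ξ = wcat v η) : S ⊆ omegaPow V := by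
  intro ξ hξ
  choose! v hv hne η hη he using h
  let s : ℕ → ℕ → X := fun n => η^[n] ξ
  have hs : ∀ n, s n ∈ S := by
    intro n
    induction n with
    | zero => exact hξ
    | succ n ih =>
      change η^[n+1] ξ ∈ S
      rw [Function.iterate_succ_apply']
      exact hη _ ih
  refine ⟨fun n => v (s n), fun i => ⟨hv _ (hs i), hne _ (hs i)⟩, fun k => ?_⟩
  refine ⟨s k, ?_⟩
  induction k with
  | zero => rfl
  | succ k ih =>
    rw [List.range_succ, List.map_append, List.flatten_append, wcat_append]
    simp only [List.map_cons, List.map_nil, List.flatten_cons, List.flatten_nil, List.append_nil]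
    have : wcat (v (s k)) (s (k+1)) = s k := by
      change wcat (v (s k)) (η^[k+1] ξ) = s k
      rw [Function.iterate_succ_apply']
      exact (he _ (hs k)).symm
    rw [this]
    exact ih

theorem kstar_ne (V : Language X) {x : List X} (h : x ∈ V∗) :
    ∃ L : List (List X), x = L.flatten ∧ ∀ y ∈ L, y ∈ V ∧ y ≠ [] := by
  rw [Language.kstar_def_nonempty] at h
  obtain ⟨L, h1, h2⟩ := h
  exact ⟨L, h1, h2⟩

theorem omega_star (V : Language X) : omegaPow (V∗) ⊆ omegaPow V := by
  let S : Set (ℕ → X) := {ξ | ∃ L : List (List X), (∀ y ∈ L, y ∈ V ∧ y ≠ []) ∧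
    ∃ b : ℕ → List X, (∀ i, b i ∈ V∗ ∧ b i ≠ []) ∧
      ∀ k, ξ ∈ cyl (L.flatten ++ ((List.range k).map b).flatten)}
  have main : ∀ (l : List X) (L : List (List X)) (b : ℕ → List X) (ξ : ℕ → X),
      (∀ y ∈ l :: L, y ∈ V ∧ y ≠ []) → (∀ i, b i ∈ V∗ ∧ b i ≠ []) →
      (∀ k, ξ ∈ cyl ((l :: L).flatten ++ ((List.range k).map b).flatten)) →
      ∃ v ∈ V, v ≠ [] ∧ ∃ η ∈ S, ξ = wcat v η := by
    intro l L b ξ hL hb hξ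
    have h0 := hξ 0
    rw [List.flatten_cons, List.append_assoc] at h0
    obtain ⟨η, rfl⟩ := cyl_append_subset _ _ h0
    refine ⟨l, (hL l (by simp)).1, (hL l (by simp)).2, η,
      ⟨L, fun y hy => hL y (by simp [hy]), b, hb, fun k => ?_⟩, rfl⟩
    have := hξ k
    rwa [List.flatten_cons, List.append_assoc, wcat_mem_cyl_append] at this
  refine Subset.trans ?_ (coind V S ?_)
  · rintro ξ ⟨b, hb, h⟩
    exact ⟨[], by simp, b, hb, by simpa using h⟩
  · rintro ξ ⟨L, hL, b, hb, h⟩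
    rcases L with _ | ⟨l, L⟩
    · obtain ⟨L, h1, h2⟩ := kstar_ne V (hb 0).1
      rcases L with _ | ⟨l, L⟩
      · exact absurd h1 (hb 0).2
      · refine main l L (fun i => b (i+1)) ξ h2 (fun i => hb _) fun k => ?_
        have := h (k+1)
        rwa [flatten_range_succ, h1] at this
    · exact main l L b ξ hL hb h

/-- Banach-Mazur argument. -/
theorem exists_dead [Nonempty X] (V : Language X) (w : List X)
    (hm : @IsMeagre _ (cantorTop X) (wcat w '' omegaPow V)) (v : List X) :
    ∃ y, ∀ z, v ++ y ++ z ∉ V∗ := by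
  by_contra! hcon
  let x : X := Classical.arbitrary X
  obtain ⟨z0, hz0⟩ := hcon [x]
  obtain ⟨v', hv', hne, hv⟩ : ∃ v' : List X, v' ∈ V∗ ∧ v' ≠ [] ∧ ∀ y, ∃ z, v' ++ y ++ z ∈ V∗ := by
    refine ⟨v ++ [x] ++ z0, hz0, by simp, fun y => ?_⟩
    obtain ⟨z, hz⟩ := hcon ([x] ++ z0 ++ y)
    exact ⟨z, by simpa using hz⟩
  letI := cantorTop X
  have hm' : (wcat w '' omegaPow V)ᶜ ∈ residual (ℕ → X) := hm
  rw [mem_residual_iff] at hm'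
  obtain ⟨S, hS1, hS2, hS3, hS4⟩ := hm'
  obtain ⟨U, hU⟩ := (hS3.insert univ).exists_eq_range (insert_nonempty _ _)
  have hUo : ∀ n, IsOpen (U n) ∧ Dense (U n) := by
    intro n
    have : U n ∈ insert univ S := hU ▸ mem_range_self n
    rcases this with h | h
    · rw [h]; exact ⟨isOpen_univ, dense_univ⟩
    · exact ⟨hS1 _ h, hS2 _ h⟩
  choose Z hZ using hv
  choose Y hY using fun n p => dense_ext (hUo n).1 (hUo n).2 p
  let blk : ℕ → List X → List X := fun n p => v' ++ Y n (p ++ v') ++ Z (Y n (p ++ v'))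
  obtain ⟨p, hp0, hp⟩ : ∃ p : ℕ → List X, p 0 = w ∧ ∀ n, p (n+1) = p n ++ blk n (p n) :=
    ⟨fun n => Nat.rec w (fun n q => q ++ blk n q) n, rfl, fun n => rfl⟩
  let b : ℕ → List X := fun n => blk n (p n)
  have hb : ∀ n, b n ∈ V∗ ∧ b n ≠ [] := fun n => ⟨hZ _, by simp [b, blk, hne]⟩
  have hpb : ∀ n, p n = w ++ ((List.range n).map b).flatten := by
    intro n
    induction n with
    | zero => simp [hp0]
    | succ n ih =>
      rw [hp, List.range_succ, List.map_append, List.flatten_append, ← List.append_assoc w, ← ih]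
      simp [b]
  obtain ⟨ξ, hξ⟩ := exists_limit b (fun n => (hb n).2)
  have h1 : wcat w ξ ∈ wcat w '' omegaPow V :=
    mem_image_of_mem _ (omega_star V ⟨b, hb, hξ⟩)
  refine hS4 ?_ h1
  intro t ht
  have : t ∈ range U := hU ▸ mem_insert_of_mem _ ht
  obtain ⟨n, rfl⟩ := this
  apply hY n (p n ++ v')
  have h2 : wcat w ξ ∈ cyl (p (n+1)) := by
    rw [hpb, wcat_mem_cyl_append]; exact hξ _
  rw [hp] at h2
  apply cyl_append_subset _ (Z (Y n (p n ++ v')))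
  simpa [blk] using h2

theorem finQ_star (W : Language X) (h : (range W.leftQuotient).Finite) :
    (range (W∗).leftQuotient).Finite := by
  let G : Set (Language X) → Language X := fun S => {z | ∃ q ∈ S, z ∈ q * W∗}
  refine ((h.powerset.image G).insert (W∗)).subset ?_
  rintro _ ⟨w, rfl⟩
  by_cases hw : w = []
  · left; rw [hw]; rfl
  right
  refine ⟨{q | ∃ a b, w = a ++ b ∧ a ∈ W∗ ∧ q = W.leftQuotient b}, ?_, ?_⟩
  · rintro q ⟨a, b, -, -, rfl⟩
    exact mem_range_self b
  · have key : ∀ (L : List (List X)) (w z : List X), (∀ y ∈ L, y ∈ W) → w ≠ [] →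
        L.flatten = w ++ z → ∃ a b, w = a ++ b ∧ a ∈ W∗ ∧ z ∈ W.leftQuotient b * W∗ := by
      intro L
      induction L with
      | nil =>
        intro w z _ hw h
        simp at h
        exact absurd h.1 hw
      | cons l L ih =>
        intro w z hL hw h
        rw [List.flatten_cons, List.append_eq_append_iff] at h
        rcases h with ⟨a, h1, h2⟩ | ⟨a, h1, h2⟩
        · by_cases ha : a = []
          · subst ha
            refine ⟨[], w, rfl, Language.nil_mem_kstar _, ?_⟩
            rw [Language.mem_mul]
            refine ⟨[], ?_, z, ?_, rfl⟩
            · rw [Language.mem_leftQuotient, h1]; simpa using hL l (by simp)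
            · rw [← List.nil_append z, ← h2]
              exact Language.join_mem_kstar fun y hy => hL y (by simp [hy])
          · obtain ⟨a', b', e1, e2, e3⟩ := ih a z (fun y hy => hL y (by simp [hy])) ha h2
            refine ⟨l ++ a', b', by rw [h1, e1, List.append_assoc], ?_, e3⟩
            rw [Language.mem_kstar] at e2 ⊢
            obtain ⟨M, rfl, hM⟩ := e2
            refine ⟨l :: M, by simp, ?_⟩
            intro y hy
            rcases List.mem_cons.1 hy with rfl | hy
            · exact hL _ (by simp)
            · exact hM _ hy
        · refine ⟨[], w, rfl, Language.nil_mem_kstar _, ?_⟩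
          rw [Language.mem_mul]
          refine ⟨a, ?_, L.flatten, ?_, h2.symm⟩
          · rw [Language.mem_leftQuotient, ← h1]; exact hL l (by simp)
          · exact Language.join_mem_kstar fun y hy => hL y (by simp [hy])
    ext z
    constructor
    · rintro ⟨q, ⟨a, b, rfl, ha, rfl⟩, hz⟩
      rw [Language.mem_mul] at hz
      obtain ⟨c, hc, d, hd, rfl⟩ := hz
      rw [Language.mem_leftQuotient] at hc ⊢
      rw [Language.mem_kstar] at ha hd ⊢
      obtain ⟨M, rfl, hM⟩ := ha
      obtain ⟨N, rfl, hN⟩ := hd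
      refine ⟨M ++ (b ++ c) :: N, by simp, ?_⟩
      intro y hy
      rcases List.mem_append.1 hy with hy | hy
      · exact hM _ hy
      · rcases List.mem_cons.1 hy with rfl | hy
        · exact hc
        · exact hN _ hy
    · intro hz
      rw [Language.mem_leftQuotient, Language.mem_kstar] at hz
      obtain ⟨L, h1, h2⟩ := hz
      obtain ⟨a, b, e1, e2, e3⟩ := key L w z h2 hw h1.symm
      exact ⟨_, ⟨a, b, e1, e2, rfl⟩, e3⟩

theorem finQ_mul (W V : Language X) (h : (range W.leftQuotient).Finite)
    (h' : (range V.leftQuotient).Finite) : (range (W * V).leftQuotient).Finite := by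
  let G : Language X × Set (Language X) → Language X :=
    fun S => {z | z ∈ S.1 * V ∨ ∃ q ∈ S.2, z ∈ q}
  refine ((h.prod h'.powerset).image G).subset ?_
  rintro _ ⟨w, rfl⟩
  refine ⟨(W.leftQuotient w, {q | ∃ a b, w = a ++ b ∧ a ∈ W ∧ q = V.leftQuotient b}), ⟨mem_range_self _, ?_⟩, ?_⟩
  · rintro q ⟨a, b, -, -, rfl⟩
    exact mem_range_self b
  · ext z
    rw [Language.mem_leftQuotient, Language.mem_mul]
    constructor
    · rintro (hz | ⟨q, ⟨a, b, rfl, ha, rfl⟩, hz⟩)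
      · rw [Language.mem_mul] at hz
        obtain ⟨c, hc, d, hd, rfl⟩ := hz
        exact ⟨w ++ c, hc, d, hd, by simp⟩
      · exact ⟨a, ha, b ++ z, hz, by simp⟩
    · rintro ⟨a, ha, b, hb, e⟩
      rw [List.append_eq_append_iff] at e
      rcases e with ⟨c, h1, h2⟩ | ⟨c, h1, h2⟩
      · right
        refine ⟨_, ⟨a, c, h1, ha, rfl⟩, ?_⟩
        rw [Language.mem_leftQuotient, ← h2]; exact hb
      · left
        refine Language.mem_mul.2 ⟨c, ?_, b, hb, h2.symm⟩
        rw [Language.mem_leftQuotient, ← h1]; exact ha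

theorem finQ {W : Language X} (h : IsRegLang W) : (range W.leftQuotient).Finite := by
  induction h with
  | finite W hW =>
    have hfin : {y : List X | ∃ x, x ++ y ∈ W}.Finite := by
      have : (⋃ l ∈ (W : Set (List X)), {y | y ∈ l.tails}).Finite :=
        hW.biUnion fun l _ => List.finite_toSet _
      refine this.subset ?_
      rintro y ⟨x, hx⟩
      simp only [mem_iUnion]
      exact ⟨x ++ y, hx, by simp⟩
    refine hfin.powerset.subset ?_
    rintro _ ⟨w, rfl⟩ y hy
    exact ⟨w, hy⟩
  | union W V _ _ h1 h2 =>
    exact (Language.IsRegular.add (.of_finite_range_leftQuotient h1)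
      (.of_finite_range_leftQuotient h2)).finite_range_leftQuotient
  | concat W V _ _ h1 h2 => exact finQ_mul W V h1 h2
  | star W _ h => exact finQ_star W h

theorem bounded_dead {V : Language X} (h : (range (V∗).leftQuotient).Finite)
    (hd : ∀ v : List X, ∃ y, ∀ z, v ++ y ++ z ∉ V∗) :
    ∃ K : ℕ, ∀ v : List X, ∃ y : List X, y.length ≤ K ∧ ∀ z, v ++ y ++ z ∉ V∗ := by
  have : ∀ q ∈ range (V∗).leftQuotient, ∃ y : List X, ∀ z, y ++ z ∉ q := by
    rintro _ ⟨v, rfl⟩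
    obtain ⟨y, hy⟩ := hd v
    refine ⟨y, fun z => ?_⟩
    rw [Language.mem_leftQuotient, ← List.append_assoc]
    exact hy z
  choose! y hy using this
  obtain ⟨K, hK⟩ := (h.image (fun q => (y q).length)).bddAbove
  refine ⟨K, fun v => ⟨y ((V∗).leftQuotient v), hK ⟨_, mem_range_self v, rfl⟩, fun z => ?_⟩⟩
  have := hy _ (mem_range_self v) z
  rwa [Language.mem_leftQuotient, ← List.append_assoc] at this

theorem real_lemma [Fintype X] (m n : List X → ℝ) (c : ℝ) (K : ℕ) (hc : 0 < c) (hc1 : c ≤ 1)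
    (hm : ∀ u, ∑ x, m (u ++ [x]) ≤ m u) (hn : ∀ u, n u ≤ ∑ x, n (u ++ [x]))
    (hn0 : ∀ u, 0 ≤ n u) (hnm : ∀ u, n u ≤ m u) (hcm : ∀ u x, c * m u ≤ m (u ++ [x]))
    (hK : ∀ u, ∃ y : List X, y.length ≤ K ∧ n (u ++ y) = 0) (u : List X) : n u = 0 := by
  classical
  have hm0 : ∀ u, 0 ≤ m u := fun u => (hn0 u).trans (hnm u)
  have step : ∀ t : ℝ, 0 ≤ t → (∀ u, n u ≤ t * m u) → ∀ (y u : List X), n (u ++ y) = 0 →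
      n u ≤ t * (1 - c ^ y.length) * m u := by
    intro t ht hnt y
    induction y with
    | nil => intro u h; simp at h; simp [h]
    | cons x y ih =>
      intro u h
      have h1 := ih (u ++ [x]) (by simpa using h)
      have h2 : ∑ x', n (u ++ [x']) ≤ ∑ x', t * m (u ++ [x']) - t * c ^ y.length * m (u ++ [x]) := by
        rw [← Finset.add_sum_erase _ _ (Finset.mem_univ x),
          ← Finset.add_sum_erase _ (fun x' => t * m (u ++ [x'])) (Finset.mem_univ x)]
        have : ∑ x' ∈ Finset.univ.erase x, n (u ++ [x']) ≤
          ∑ x' ∈ Finset.univ.erase x, t * m (u ++ [x']) := Finset.sum_le_sum fun _ _ => hnt _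
        nlinarith
      rw [← Finset.mul_sum] at h2
      have h3 := mul_le_mul_of_nonneg_left (hm u) ht
      have h4 := mul_le_mul_of_nonneg_left (hcm u x) (mul_nonneg ht (pow_nonneg hc.le y.length))
      have := hn u
      rw [List.length_cons, pow_succ]
      nlinarith
  set r := 1 - c ^ K with hr
  have hr0 : 0 ≤ r := sub_nonneg.2 (pow_le_one₀ hc.le hc1)
  have hr1 : r < 1 := by have := pow_pos hc K; linarith
  have hall : ∀ (N : ℕ) (u : List X), n u ≤ r ^ N * m u := by
    intro N
    induction N with
    | zero => intro u; simpa using hnm u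
    | succ N ih =>
      intro u
      obtain ⟨y, hy, hy0⟩ := hK u
      refine (step (r ^ N) (pow_nonneg hr0 N) ih y u hy0).trans ?_
      rw [pow_succ]
      have : c ^ K ≤ c ^ y.length := pow_le_pow_of_le_one hc.le hc1 hy
      have h5 : 1 - c ^ y.length ≤ r := by linarith
      exact mul_le_mul_of_nonneg_right
        (mul_le_mul_of_nonneg_left h5 (pow_nonneg hr0 N)) (hm0 u)
  have hlim : Filter.Tendsto (fun N => r ^ N * m u) Filter.atTop (nhds 0) := by
    simpa using (tendsto_pow_atTop_nhds_zero_of_lt_one hr0 hr1).mul_const (m u)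
  exact le_antisymm (ge_of_tendsto' hlim fun N => hall N u) (hn0 u)

theorem cyl_eq_iUnion (w : List X) : cyl w = ⋃ x, cyl (w ++ [x]) := by
  apply Subset.antisymm
  · rintro ξ ⟨η, rfl⟩
    refine mem_iUnion.2 ⟨η 0, ?_⟩
    rw [wcat_mem_cyl_append, mem_cyl_iff]
    intro i hi
    simp at hi
    subst hi; rfl
  · exact iUnion_subset fun x => cyl_append_subset _ _

theorem null_lemma [Fintype X] [Nonempty X] (μ : @MeasureTheory.Measure (ℕ → X) (cantorBorel X))
    (h1 : FiniteNonNull μ) (h2 : FullSupport μ) (h3 : Balanced μ) (A : Set (ℕ → X)) (w : List X)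
    (K : ℕ) (hK : ∀ u, ∃ y : List X, y.length ≤ K ∧ cyl (w ++ (u ++ y)) ∩ A = ∅) :
    μ (cyl w ∩ A) = 0 := by
  letI := cantorTop X
  letI := cantorBorel X
  haveI : BorelSpace (ℕ → X) := ⟨rfl⟩
  haveI : IsFiniteMeasure μ := ⟨h1.2⟩
  obtain ⟨c, hc0, hc⟩ := h3
  have hmc : min c 1 ≠ ⊤ := ne_top_of_le_ne_top ENNReal.one_ne_top (min_le_right c 1)
  have hpos : ∀ u : List X, μ (cyl u) ≠ 0 := fun u =>
    (h2 _ (isOpen_cyl u) ⟨wcat u (fun _ => Classical.arbitrary X), _, rfl⟩).ne'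
  have := real_lemma (fun u => μ.real (cyl (w ++ u))) (fun u => μ.real (cyl (w ++ u) ∩ A))
    (min c 1).toReal K (ENNReal.toReal_pos (by simp [hc0.ne']) hmc)
    (ENNReal.toReal_le_of_le_ofReal zero_le_one (by simp))
    ?_ ?_ (fun _ => measureReal_nonneg) (fun u => measureReal_mono inter_subset_left) ?_ ?_ []
  · simp only [List.append_nil] at this
    exact (measureReal_eq_zero_iff).1 this
  · intro u
    rw [cyl_eq_iUnion (w ++ u)]
    simp only [← List.append_assoc]
    rw [measureReal_iUnion_fintype]
    · intro x y hxy
      refine Set.disjoint_left.2 ?_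
      intro ξ hx hy
      rw [mem_cyl_iff] at hx hy
      have e1 := hx (w ++ u).length (by simp)
      have e2 := hy (w ++ u).length (by simp)
      rw [e1] at e2
      simp at e2
      exact hxy e2
    · exact fun x => (isOpen_cyl _).measurableSet
  · intro u
    rw [cyl_eq_iUnion (w ++ u), iUnion_inter]
    simp only [← List.append_assoc]
    exact measureReal_iUnion_fintype_le _
  · intro u x
    have := (hc (w ++ u) x).resolve_left (hpos _)
    rw [measureReal_def, measureReal_def, ← ENNReal.toReal_mul, ← List.append_assoc]
    refine ENNReal.toReal_mono (measure_ne_top _ _) (le_trans ?_ this)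
    gcongr
    exact min_le_left _ _
  · intro u
    obtain ⟨y, hy, h⟩ := hK u
    exact ⟨y, hy, by rw [h]; simp⟩

theorem null_reg [Fintype X] [Nonempty X] (μ : @MeasureTheory.Measure (ℕ → X) (cantorBorel X))
    (h1 : FiniteNonNull μ) (h2 : FullSupport μ) (h3 : Balanced μ) (V : Language X)
    (hV : IsRegLang V) (w : List X)
    (hm : @IsMeagre _ (cantorTop X) (wcat w '' omegaPow V)) : μ (wcat w '' omegaPow V) = 0 := by
  obtain ⟨K, hK⟩ := bounded_dead (finQ_star V (finQ hV)) (exists_dead V w hm)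
  have : wcat w '' omegaPow V = cyl w ∩ wcat w '' omegaPow V := by
    refine (inter_eq_right.2 ?_).symm
    rintro _ ⟨η, -, rfl⟩
    exact ⟨η, rfl⟩
  rw [this]
  refine null_lemma μ h1 h2 h3 _ w K fun u => ?_
  obtain ⟨y, hy, hd⟩ := hK u
  refine ⟨y, hy, ?_⟩
  rw [Set.eq_empty_iff_forall_notMem]
  rintro _ ⟨hc, η, ⟨f, hf, hη⟩, rfl⟩
  rw [wcat_mem_cyl_append] at hc
  let k := (u ++ y).length
  have hlen : k ≤ (((List.range k).map f).flatten).length :=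
    le_length_flatten f (fun i => (hf i).2) k
  have hpre : u ++ y <+: ((List.range k).map f).flatten := by
    rw [List.prefix_iff_getElem]
    refine ⟨hlen, fun i hi => ?_⟩
    have e1 := hη k
    rw [mem_cyl_iff] at e1 hc
    rw [← hc i hi, ← e1 i (lt_of_lt_of_le hi hlen)]
  obtain ⟨z, hz⟩ := hpre
  refine hd z ?_
  rw [hz]
  refine Language.join_mem_kstar ?_
  intro l hl
  obtain ⟨i, -, rfl⟩ := List.mem_map.1 hl
  exact (hf i).1

theorem open_meagre_empty [Finite X] {E : Set (ℕ → X)} (hE : @IsOpen _ (cantorTop X) E)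
    (hm : @IsMeagre _ (cantorTop X) E) : E = ∅ := by
  letI : TopologicalSpace X := ⊥
  haveI : DiscreteTopology X := ⟨rfl⟩
  have hE' : IsOpen E := hE
  have hm' : Eᶜ ∈ residual (ℕ → X) := hm
  have hd : Dense Eᶜ := dense_of_mem_residual hm'
  by_contra h
  obtain ⟨ξ, a, b⟩ := hd.inter_open_nonempty E hE' (nonempty_iff_ne_empty.2 h)
  exact b a

theorem stmt11 {X : Type} [Fintype X] (hX : 2 ≤ Fintype.card X)
    (F E F' : Set (ℕ → X)) (hE : @IsOpen _ (cantorTop X) E)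
    (hreg : IsRegOmega F') (hmea : @IsMeagre _ (cantorTop X) F')
    (hΔ : symmDiff F E ⊆ F') :
    ∀ μ : @MeasureTheory.Measure (ℕ → X) (cantorBorel X),
      FiniteNonNull μ → FullSupport μ → Balanced μ →
        (μ F = 0 ↔ @IsMeagre _ (cantorTop X) F) := by
  intro μ h1 h2 h3
  haveI : Nonempty X := Fintype.card_pos_iff.1 (by omega)
  have hnull : μ F' = 0 := by
    obtain ⟨n, W, V, hWV, rfl⟩ := hreg
    refine measure_iUnion_null fun i => ?_
    have hsub : catOmega (W i) (omegaPow (V i)) = ⋃ w ∈ (W i : Set (List X)), wcat w '' omegaPow (V i) := by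
      ext ξ
      simp only [mem_iUnion]
      constructor
      · rintro ⟨w, hw, η, hη, rfl⟩
        exact ⟨w, hw, η, hη, rfl⟩
      · rintro ⟨w, hw, η, hη, rfl⟩
        exact ⟨w, hw, η, hη, rfl⟩
    rw [hsub]
    refine measure_iUnion_null fun w => measure_iUnion_null fun hw => ?_
    refine null_reg μ h1 h2 h3 (V i) (hWV i).2 w ?_
    letI := cantorTop X
    refine hmea.mono ?_
    refine Subset.trans ?_ (subset_iUnion _ i)
    rw [hsub]
    exact subset_biUnion_of_mem (u := fun w => wcat w '' omegaPow (V i)) hw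
  have hFE : E = ∅ → F ⊆ F' := by
    rintro rfl ξ hξ
    exact hΔ (Or.inl ⟨hξ, fun h => h⟩)
  have hEF : E ⊆ F ∪ F' := by
    intro ξ hξ
    by_cases h : ξ ∈ F
    · exact Or.inl h
    · exact Or.inr (hΔ (Or.inr ⟨hξ, h⟩))
  constructor
  · intro hF
    have hE0 : μ E = 0 := measure_mono_null hEF (measure_union_null hF hnull)
    have hEe : E = ∅ := by
      by_contra h
      exact (h2 E hE (nonempty_iff_ne_empty.2 h)).ne' hE0
    letI := cantorTop X
    exact hmea.mono (hFE hEe)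
  · intro hF
    have : E = ∅ := by
      refine open_meagre_empty hE ?_
      letI := cantorTop X
      exact (hF.union hmea).mono hEF
    exact measure_mono_null (hFE this) hnull

end AutoBaire
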